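/- arXiv:1402.4561 — 2 statements merged into one kernel-verified Lean document; each statement's English description precedes it below -/
import Mathlib

section
/- The function r ↦ (E(r) − (1−r²)K(r))/r² is strictly increasing on (0,1), and it maps (0,1) onto the interval (π/4, 1); in particular its limit as r → 0⁺ is π/4 and its limit as r → 1⁻ is 1. -/
/-!
Since `(1 - r² sin² θ) - (1 - r²) = r² cos² θ`, the quotient `(E(r) - (1 - r²) K(r)) / r²` is
the integral `B(r) = ∫₀^{π/2} cos² θ / √(1 - r² sin² θ) dθ`. Unlike `K`, this integral stays finite
at `r = 1`, because `cos² θ ≤ 1 - r² sin² θ` bounds its integrand by `|cos θ|`. For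
`0 < θ < π / 2` the integrand is strictly increasing and continuous in `r`, so `B` is strictly
increasing and, by dominated convergence, continuous on all of `[0, 1]`. Its end values are
`∫₀^{π/2} cos² θ dθ = π / 4` and `∫₀^{π/2} cos θ dθ = 1`.
-/

open Real

/-- The complete elliptic integral of the first kind. -/
noncomputable def ellipticK (r : ℝ) : ℝ :=
  ∫ θ in (0 : ℝ)..(π / 2), (Real.sqrt (1 - r ^ 2 * sin θ ^ 2))⁻¹

/-- The complete elliptic integral of the second kind. -/
noncomputable def ellipticE (r : ℝ) : ℝ :=
  ∫ θ in (0 : ℝ)..(π / 2), Real.sqrt (1 - r ^ 2 * sin θ ^ 2)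

/-- The integrand `cos² θ / √(1 - r² sin² θ)` of the associated complete elliptic integral `B`.
Where the denominator vanishes, `x / 0 = 0` gives it the value `0`; for `|r| ≤ 1` this is the
continuous extension in each of the two variables. -/
noncomputable def ellipticBIntegrand (r θ : ℝ) : ℝ :=
  cos θ ^ 2 / √(1 - r ^ 2 * sin θ ^ 2)

/-- The associated complete elliptic integral `B(r) = (E(r) - (1 - r²) K(r)) / r²`, encoded by its
integral representation, which also covers `r = 0` and `r = ±1`. -/
noncomputable def ellipticB (r : ℝ) : ℝ :=
  ∫ θ in (0 : ℝ)..(π / 2), ellipticBIntegrand r θ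

section Radicand

variable {r : ℝ}

lemma cos_sq_le_one_sub_sq_mul_sin_sq (hr : |r| ≤ 1) (θ : ℝ) :
    cos θ ^ 2 ≤ 1 - r ^ 2 * sin θ ^ 2 := by
  rw [cos_sq']
  gcongr
  exact mul_le_of_le_one_left (sq_nonneg _) ((sq_le_one_iff_abs_le_one r).2 hr)

lemma one_sub_sq_mul_sin_sq_pos_of_cos_ne_zero (hr : |r| ≤ 1) {θ : ℝ} (hθ : cos θ ≠ 0) :
    0 < 1 - r ^ 2 * sin θ ^ 2 :=
  (sq_pos_of_ne_zero hθ).trans_le (cos_sq_le_one_sub_sq_mul_sin_sq hr θ)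

lemma one_sub_sq_mul_sin_sq_pos (hr : |r| < 1) (θ : ℝ) : 0 < 1 - r ^ 2 * sin θ ^ 2 :=
  sub_pos.2 <| (mul_le_of_le_one_right (sq_nonneg r) (sin_sq_le_one θ)).trans_lt <|
    (sq_lt_one_iff_abs_lt_one r).2 hr

end Radicand

section Integrand

variable {r θ : ℝ}

lemma ellipticBIntegrand_of_cos_eq_zero (hθ : cos θ = 0) : ellipticBIntegrand r θ = 0 := by
  simp [ellipticBIntegrand, hθ]

lemma ellipticBIntegrand_of_abs_eq_one (hr : |r| = 1) : ellipticBIntegrand r θ = |cos θ| := by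
  have hr2 : r ^ 2 = 1 := by rw [← sq_abs, hr, one_pow]
  rw [ellipticBIntegrand, hr2, one_mul, ← cos_sq', sqrt_sq_eq_abs, ← sq_abs, sq,
    mul_self_div_self]

lemma ellipticBIntegrand_nonneg : 0 ≤ ellipticBIntegrand r θ :=
  div_nonneg (sq_nonneg _) (sqrt_nonneg _)

lemma ellipticBIntegrand_le_abs_cos (hr : |r| ≤ 1) : ellipticBIntegrand r θ ≤ |cos θ| := by
  refine div_le_of_le_mul₀ (sqrt_nonneg _) (abs_nonneg _) ?_
  calc
    cos θ ^ 2 = |cos θ| * |cos θ| := by rw [← sq, sq_abs]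
    _ ≤ |cos θ| * √(1 - r ^ 2 * sin θ ^ 2) := by
      gcongr
      exact abs_le_sqrt (cos_sq_le_one_sub_sq_mul_sin_sq hr θ)

lemma strictMonoOn_ellipticBIntegrand (hsin : sin θ ≠ 0) (hcos : cos θ ≠ 0) :
    StrictMonoOn (fun r ↦ ellipticBIntegrand r θ) (Set.Icc 0 1) := by
  intro a ha b hb hab
  have ha0 : 0 ≤ a := ha.1
  have hb1 : |b| ≤ 1 := (abs_of_nonneg hb.1).trans_le hb.2
  have hden : 0 < √(1 - b ^ 2 * sin θ ^ 2) :=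
    sqrt_pos.2 (one_sub_sq_mul_sin_sq_pos_of_cos_ne_zero hb1 hcos)
  dsimp only [ellipticBIntegrand]
  gcongr
  exact (sqrt_pos.1 hden).le

lemma monotoneOn_ellipticBIntegrand :
    MonotoneOn (fun r ↦ ellipticBIntegrand r θ) (Set.Icc 0 1) := by
  by_cases hcos : cos θ = 0
  · simpa only [ellipticBIntegrand_of_cos_eq_zero hcos] using monotoneOn_const
  by_cases hsin : sin θ = 0
  · simpa [ellipticBIntegrand, hsin] using monotoneOn_const
  · exact (strictMonoOn_ellipticBIntegrand hsin hcos).monotoneOn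

lemma continuousOn_ellipticBIntegrand_left :
    ContinuousOn (fun r ↦ ellipticBIntegrand r θ) (Set.Icc (-1) 1) := by
  by_cases hcos : cos θ = 0
  · simpa only [ellipticBIntegrand_of_cos_eq_zero hcos] using continuousOn_const
  · refine continuousOn_const.div (by fun_prop) fun r hr ↦ (sqrt_pos.2 ?_).ne'
    exact one_sub_sq_mul_sin_sq_pos_of_cos_ne_zero (abs_le.2 hr) hcos

lemma continuous_ellipticBIntegrand (hr : |r| ≤ 1) : Continuous (ellipticBIntegrand r) := by
  rcases hr.eq_or_lt with hr | hr
  · exact continuous_cos.abs.congr fun _ ↦ (ellipticBIntegrand_of_abs_eq_one hr).symm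
  · exact (continuous_cos.pow 2).div (by fun_prop) fun θ ↦
      (sqrt_pos.2 (one_sub_sq_mul_sin_sq_pos hr θ)).ne'

end Integrand

lemma strictMonoOn_ellipticB : StrictMonoOn ellipticB (Set.Icc 0 1) := by
  intro a ha b hb hab
  have hcont {r : ℝ} (hr : r ∈ Set.Icc 0 1) :
      ContinuousOn (ellipticBIntegrand r) (Set.Icc 0 (π / 2)) :=
    (continuous_ellipticBIntegrand ((abs_of_nonneg hr.1).trans_le hr.2)).continuousOn
  have hlt : ellipticBIntegrand a (π / 4) < ellipticBIntegrand b (π / 4) :=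
    strictMonoOn_ellipticBIntegrand (by simp) (by simp) ha hb hab
  exact intervalIntegral.integral_lt_integral_of_continuousOn_of_le_of_exists_lt pi_div_two_pos
    (hcont ha) (hcont hb) (fun θ _ ↦ monotoneOn_ellipticBIntegrand ha hb hab.le)
    ⟨π / 4, ⟨by positivity, by linarith [pi_pos]⟩, hlt⟩

lemma continuousOn_ellipticB : ContinuousOn ellipticB (Set.Icc (-1) 1) := by
  intro r hr
  refine intervalIntegral.continuousWithinAt_of_dominated_interval (bound := fun θ ↦ |cos θ|)
    ?_ ?_ (continuous_cos.abs.intervalIntegrable _ _)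
    (.of_forall fun θ _ ↦ continuousOn_ellipticBIntegrand_left r hr)
  · filter_upwards [self_mem_nhdsWithin] with x hx
    exact (continuous_ellipticBIntegrand (abs_le.2 hx)).aestronglyMeasurable
  · filter_upwards [self_mem_nhdsWithin] with x hx
    refine .of_forall fun θ _ ↦ ?_
    rw [norm_of_nonneg ellipticBIntegrand_nonneg]
    exact ellipticBIntegrand_le_abs_cos (abs_le.2 hx)

lemma ellipticB_zero : ellipticB 0 = π / 4 := by
  have hint (θ : ℝ) : ellipticBIntegrand 0 θ = cos θ ^ 2 := by simp [ellipticBIntegrand]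
  simp only [ellipticB, hint, integral_cos_sq, cos_pi_div_two, sin_zero]
  ring

lemma ellipticB_one : ellipticB 1 = 1 := by
  have hint : Set.EqOn (ellipticBIntegrand 1) cos (Set.uIcc 0 (π / 2)) := by
    intro θ hθ
    rw [Set.uIcc_of_le pi_div_two_pos.le] at hθ
    rw [ellipticBIntegrand_of_abs_eq_one abs_one,
      abs_of_nonneg (cos_nonneg_of_neg_pi_div_two_le_of_le (by linarith [hθ.1, pi_pos]) hθ.2)]
  rw [ellipticB, intervalIntegral.integral_congr hint, integral_cos, sin_pi_div_two, sin_zero,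
    sub_zero]

lemma sqrt_sub_mul_inv_sqrt_eq_sq_mul_ellipticBIntegrand {r θ : ℝ}
    (h : 0 < 1 - r ^ 2 * sin θ ^ 2) :
    √(1 - r ^ 2 * sin θ ^ 2) - (1 - r ^ 2) * (√(1 - r ^ 2 * sin θ ^ 2))⁻¹ =
      r ^ 2 * ellipticBIntegrand r θ := by
  have hne : √(1 - r ^ 2 * sin θ ^ 2) ≠ 0 := (sqrt_pos.2 h).ne'
  rw [ellipticBIntegrand, cos_sq']
  field_simp
  rw [sq_sqrt h.le]
  ring

lemma ellipticE_sub_mul_ellipticK {r : ℝ} (hr : |r| < 1) :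
    ellipticE r - (1 - r ^ 2) * ellipticK r = r ^ 2 * ellipticB r := by
  have hpos := one_sub_sq_mul_sin_sq_pos hr
  have hE : Continuous fun θ ↦ √(1 - r ^ 2 * sin θ ^ 2) := by fun_prop
  have hK : Continuous fun θ ↦ (√(1 - r ^ 2 * sin θ ^ 2))⁻¹ :=
    hE.inv₀ fun θ ↦ (sqrt_pos.2 (hpos θ)).ne'
  rw [ellipticE, ellipticK, ellipticB, ← intervalIntegral.integral_const_mul,
    ← intervalIntegral.integral_const_mul,
    ← intervalIntegral.integral_sub (hE.intervalIntegrable _ _)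
      ((hK.const_mul _).intervalIntegrable _ _)]
  exact intervalIntegral.integral_congr fun θ _ ↦
    sqrt_sub_mul_inv_sqrt_eq_sq_mul_ellipticBIntegrand (hpos θ)

lemma ellipticB_eq_div {r : ℝ} (hr0 : r ≠ 0) (hr : |r| < 1) :
    ellipticB r = (ellipticE r - (1 - r ^ 2) * ellipticK r) / r ^ 2 := by
  rw [ellipticE_sub_mul_ellipticK hr, mul_div_cancel_left₀ _ (pow_ne_zero 2 hr0)]

theorem stmt9 :
    StrictMonoOn (fun r : ℝ => (ellipticE r - (1 - r ^ 2) * ellipticK r) / r ^ 2)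
      (Set.Ioo (0 : ℝ) 1) ∧
    (fun r : ℝ => (ellipticE r - (1 - r ^ 2) * ellipticK r) / r ^ 2) '' Set.Ioo (0 : ℝ) 1
      = Set.Ioo (π / 4) 1 ∧
    Filter.Tendsto (fun r : ℝ => (ellipticE r - (1 - r ^ 2) * ellipticK r) / r ^ 2)
      (nhdsWithin 0 (Set.Ioi 0)) (nhds (π / 4)) ∧
    Filter.Tendsto (fun r : ℝ => (ellipticE r - (1 - r ^ 2) * ellipticK r) / r ^ 2)
      (nhdsWithin 1 (Set.Iio 1)) (nhds 1) := by
  have hB : Set.EqOn ellipticB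
      (fun r : ℝ ↦ (ellipticE r - (1 - r ^ 2) * ellipticK r) / r ^ 2) (Set.Ioo 0 1) :=
    fun r hr ↦ ellipticB_eq_div hr.1.ne' ((abs_of_pos hr.1).trans_lt hr.2)
  have hcont : ContinuousOn ellipticB (Set.Icc 0 1) :=
    continuousOn_ellipticB.mono (Set.Icc_subset_Icc_left (by norm_num))
  have hlim {x : ℝ} (hx : x ∈ Set.Icc 0 1) :
      Filter.Tendsto (fun r : ℝ ↦ (ellipticE r - (1 - r ^ 2) * ellipticK r) / r ^ 2)
        (nhdsWithin x (Set.Ioo 0 1)) (nhds (ellipticB x)) :=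
    ((hcont x hx).mono Set.Ioo_subset_Icc_self).tendsto.congr'
      (hB.eventuallyEq_of_mem self_mem_nhdsWithin)
  refine ⟨(strictMonoOn_ellipticB.mono Set.Ioo_subset_Icc_self).congr hB, ?_, ?_, ?_⟩
  · rw [← hB.image_eq, hcont.image_Ioo_of_strictMonoOn zero_le_one strictMonoOn_ellipticB,
      ellipticB_zero, ellipticB_one]
  · simpa only [nhdsWithin_Ioo_eq_nhdsGT zero_lt_one, ellipticB_zero] using
      hlim (Set.left_mem_Icc.2 zero_le_one)
  · simpa only [nhdsWithin_Ioo_eq_nhdsLT zero_lt_one, ellipticB_one] using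
      hlim (Set.right_mem_Icc.2 zero_le_one)
end

section
/- For all r ∈ (0,1), one has the Landen-type identity E(2√r/(1+r)) = (2E(r) − (1−r²)K(r))/(1+r). -/
/-!
Landen's substitution `u = (θ + arcsin (r sin θ)) / 2` maps `[0, π]` onto `[0, π / 2]`. With
`Δ = √(1 - r² sin² θ)` and `k² = 4 r / (1 + r)²` one has `(1 + r) √(1 - k² sin² u) = Δ + r cos θ`
and `du/dθ = (Δ + r cos θ) / (2 Δ)`. Hence `(1 + r) E(k) = ∫₀^π (Δ + r cos θ)² / (2 Δ) dθ`, and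
since `r² cos² θ = Δ² - (1 - r²)`, the integrand equals `Δ - (1 - r²) / (2 Δ) + r cos θ`. The
cosine term integrates to zero, and the symmetry `θ ↦ π - θ` turns the integrals of `Δ` and `Δ⁻¹`
over `[0, π]` into `2 E(r)` and `2 K(r)`.
-/

open Real

lemma intervalIntegral_eq_two_smul_of_comp_sub_left {E : Type*} [NormedAddCommGroup E]
    [NormedSpace ℝ E] {f : ℝ → E} {a : ℝ} (hf : IntervalIntegrable f MeasureTheory.volume 0 (a / 2))
    (hsymm : ∀ x, f (a - x) = f x) :
    ∫ x in (0 : ℝ)..a, f x = (2 : ℝ) • ∫ x in (0 : ℝ)..(a / 2), f x := by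
  have hf' : IntervalIntegrable f MeasureTheory.volume (a / 2) a := by
    simpa only [hsymm, sub_zero, sub_half] using (hf.comp_sub_left a).symm
  have hreflect : ∫ x in (a / 2)..a, f x = ∫ x in (0 : ℝ)..(a / 2), f x := by
    simpa only [hsymm, sub_zero, sub_half] using
      (intervalIntegral.integral_comp_sub_left (a := 0) (b := a / 2) f a).symm
  rw [← intervalIntegral.integral_add_adjacent_intervals hf hf', hreflect, two_smul]

/-- Legendre's `Δ(θ, r) = √(1 - r² sin² θ)`, the integrand of the complete elliptic integral of the
second kind with modulus `r`. -/
noncomputable def legendreDelta (r θ : ℝ) : ℝ := √(1 - r ^ 2 * sin θ ^ 2)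

/-- The amplitude `u` given by Landen's substitution `sin (2 u - θ) = r sin θ`. -/
noncomputable def landenAngle (r θ : ℝ) : ℝ := (θ + arcsin (r * sin θ)) / 2

lemma abs_mul_sin_le (r θ : ℝ) : |r * sin θ| ≤ |r| := by
  rw [abs_mul]
  exact mul_le_of_le_one_right (abs_nonneg r) (abs_sin_le_one θ)

@[fun_prop]
lemma continuous_legendreDelta (r : ℝ) : Continuous (legendreDelta r) := by
  unfold legendreDelta
  fun_prop

lemma legendreDelta_pi_sub (r θ : ℝ) : legendreDelta r (π - θ) = legendreDelta r θ := by
  rw [legendreDelta, sin_pi_sub, legendreDelta]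

lemma integral_legendreDelta_zero_pi (r : ℝ) :
    ∫ θ in (0 : ℝ)..π, legendreDelta r θ = 2 * ellipticE r :=
  intervalIntegral_eq_two_smul_of_comp_sub_left
    ((continuous_legendreDelta r).intervalIntegrable _ _) (legendreDelta_pi_sub r)

lemma landenAngle_zero (r : ℝ) : landenAngle r 0 = 0 := by simp [landenAngle]

lemma landenAngle_pi (r : ℝ) : landenAngle r π = π / 2 := by simp [landenAngle]

section

variable {r : ℝ}

lemma sq_legendreDelta (hr : |r| ≤ 1) (θ : ℝ) :
    legendreDelta r θ ^ 2 = 1 - r ^ 2 * sin θ ^ 2 := by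
  refine sq_sqrt (sub_nonneg.2 ?_)
  rw [← mul_pow, sq_le_one_iff_abs_le_one]
  exact (abs_mul_sin_le r θ).trans hr

lemma legendreDelta_pos (hr : |r| < 1) (θ : ℝ) : 0 < legendreDelta r θ := by
  refine sqrt_pos.2 (sub_pos.2 ?_)
  rw [← mul_pow, sq_lt_one_iff_abs_lt_one]
  exact (abs_mul_sin_le r θ).trans_lt hr

lemma continuous_inv_legendreDelta (hr : |r| < 1) : Continuous fun θ ↦ (legendreDelta r θ)⁻¹ :=
  (continuous_legendreDelta r).inv₀ fun θ ↦ (legendreDelta_pos hr θ).ne'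

lemma abs_mul_cos_le_legendreDelta (hr : |r| ≤ 1) (θ : ℝ) : |r * cos θ| ≤ legendreDelta r θ := by
  apply abs_le_sqrt
  rw [mul_pow, cos_sq']
  linarith [(sq_le_one_iff_abs_le_one r).2 hr]

lemma integral_inv_legendreDelta_zero_pi (hr : |r| < 1) :
    ∫ θ in (0 : ℝ)..π, (legendreDelta r θ)⁻¹ = 2 * ellipticK r :=
  intervalIntegral_eq_two_smul_of_comp_sub_left
    ((continuous_inv_legendreDelta hr).intervalIntegrable _ _)
    fun θ ↦ by rw [legendreDelta_pi_sub]

lemma cos_two_mul_landenAngle (hr : |r| ≤ 1) (θ : ℝ) :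
    cos (2 * landenAngle r θ) = cos θ * legendreDelta r θ - r * sin θ ^ 2 := by
  obtain ⟨hlo, hhi⟩ := abs_le.1 ((abs_mul_sin_le r θ).trans hr)
  rw [landenAngle, mul_div_cancel₀ _ two_ne_zero, cos_add, cos_arcsin, sin_arcsin hlo hhi, mul_pow,
    legendreDelta]
  ring

lemma sq_legendreDelta_add_mul_cos (hr : |r| ≤ 1) (θ : ℝ) :
    (legendreDelta r θ + r * cos θ) ^ 2 = (1 + r) ^ 2 - 4 * r * sin (landenAngle r θ) ^ 2 := by
  rw [sin_sq_eq_half_sub, cos_two_mul_landenAngle hr]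
  linear_combination sq_legendreDelta hr θ + r ^ 2 * cos_sq' θ

lemma sqrt_one_sub_mul_sin_sq_landenAngle (hlo : -1 < r) (hhi : r ≤ 1) (θ : ℝ) :
    √(1 - 4 * r / (1 + r) ^ 2 * sin (landenAngle r θ) ^ 2)
      = (legendreDelta r θ + r * cos θ) / (1 + r) := by
  have hr : |r| ≤ 1 := abs_le.2 ⟨hlo.le, hhi⟩
  have hr₁ : 0 < 1 + r := by linarith
  have hnonneg : 0 ≤ legendreDelta r θ + r * cos θ := by
    linarith [(abs_le.1 (abs_mul_cos_le_legendreDelta hr θ)).1]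
  have hsq : 1 - 4 * r / (1 + r) ^ 2 * sin (landenAngle r θ) ^ 2
      = ((legendreDelta r θ + r * cos θ) / (1 + r)) ^ 2 := by
    rw [div_pow, sq_legendreDelta_add_mul_cos hr]
    field_simp
  rw [hsq, sqrt_sq (div_nonneg hnonneg hr₁.le)]

lemma hasDerivAt_landenAngle (hr : |r| < 1) (θ : ℝ) :
    HasDerivAt (landenAngle r)
      ((legendreDelta r θ + r * cos θ) / (2 * legendreDelta r θ)) θ := by
  obtain ⟨hlo, hhi⟩ := abs_lt.1 ((abs_mul_sin_le r θ).trans_lt hr)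
  have hΔ := (legendreDelta_pos hr θ).ne'
  have harcsin : HasDerivAt (fun θ ↦ arcsin (r * sin θ))
      (1 / legendreDelta r θ * (r * cos θ)) θ := by
    rw [legendreDelta, ← mul_pow]
    exact (hasDerivAt_arcsin hlo.ne' hhi.ne).comp θ ((hasDerivAt_sin θ).const_mul r)
  refine (((hasDerivAt_id θ).add harcsin).div_const 2).congr_deriv ?_
  field_simp

lemma sq_legendreDelta_add_mul_cos_div (hr : |r| < 1) (θ : ℝ) :
    (legendreDelta r θ + r * cos θ) ^ 2 / (2 * legendreDelta r θ)
      = legendreDelta r θ - (1 - r ^ 2) / 2 * (legendreDelta r θ)⁻¹ + r * cos θ := by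
  have hΔ := (legendreDelta_pos hr θ).ne'
  field_simp
  linear_combination r ^ 2 * cos_sq' θ - sq_legendreDelta hr.le θ

theorem integral_sqrt_zero_landenAngle (hr : |r| < 1) (φ : ℝ) :
    ∫ u in (0 : ℝ)..landenAngle r φ, √(1 - 4 * r / (1 + r) ^ 2 * sin u ^ 2)
      = ((∫ θ in (0 : ℝ)..φ, legendreDelta r θ)
          - (1 - r ^ 2) / 2 * (∫ θ in (0 : ℝ)..φ, (legendreDelta r θ)⁻¹) + r * sin φ)
        / (1 + r) := by
  have hinv := continuous_inv_legendreDelta hr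
  have hderiv : Continuous fun θ ↦
      (legendreDelta r θ + r * cos θ) / (2 * legendreDelta r θ) := by
    refine Continuous.div (by fun_prop) (by fun_prop) fun θ ↦ ?_
    exact mul_ne_zero two_ne_zero (legendreDelta_pos hr θ).ne'
  calc ∫ u in (0 : ℝ)..landenAngle r φ, √(1 - 4 * r / (1 + r) ^ 2 * sin u ^ 2)
    _ = ∫ θ in (0 : ℝ)..φ, √(1 - 4 * r / (1 + r) ^ 2 * sin (landenAngle r θ) ^ 2)
          * ((legendreDelta r θ + r * cos θ) / (2 * legendreDelta r θ)) := by
      have hsubst := intervalIntegral.integral_comp_mul_deriv (a := 0) (b := φ)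
        (g := fun u ↦ √(1 - 4 * r / (1 + r) ^ 2 * sin u ^ 2))
        (fun θ _ ↦ hasDerivAt_landenAngle hr θ) hderiv.continuousOn (by fun_prop)
      simpa only [landenAngle_zero, Function.comp_apply] using hsubst.symm
    _ = ∫ θ in (0 : ℝ)..φ, (legendreDelta r θ - (1 - r ^ 2) / 2 * (legendreDelta r θ)⁻¹
          + r * cos θ) / (1 + r) := by
      obtain ⟨hlo, hhi⟩ := abs_lt.1 hr
      refine intervalIntegral.integral_congr fun θ _ ↦ ?_
      simp only [sqrt_one_sub_mul_sin_sq_landenAngle hlo hhi.le,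
        ← sq_legendreDelta_add_mul_cos_div hr]
      ring
    _ = _ := by
      rw [intervalIntegral.integral_div, intervalIntegral.integral_add,
        intervalIntegral.integral_sub, intervalIntegral.integral_const_mul,
        intervalIntegral.integral_const_mul, integral_cos, sin_zero, sub_zero]
      all_goals exact Continuous.intervalIntegrable (by fun_prop) _ _

end

-- A modulus `k` with `k² = 4 r / (1 + r)²` is imaginary for `r < 0`, so only `k²` appears.
theorem stmt13_general (r : ℝ) (hr : |r| < 1) :
    ∫ u in (0 : ℝ)..(π / 2), √(1 - 4 * r / (1 + r) ^ 2 * sin u ^ 2)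
      = (2 * ellipticE r - (1 - r ^ 2) * ellipticK r) / (1 + r) := by
  rw [← landenAngle_pi r, integral_sqrt_zero_landenAngle hr, integral_legendreDelta_zero_pi,
    integral_inv_legendreDelta_zero_pi hr, sin_pi]
  ring

theorem stmt13 (r : ℝ) (hr : r ∈ Set.Ioo (0 : ℝ) 1) :
    ellipticE (2 * Real.sqrt r / (1 + r))
      = (2 * ellipticE r - (1 - r ^ 2) * ellipticK r) / (1 + r) := by
  rw [← stmt13_general r ((abs_of_pos hr.1).trans_lt hr.2), ellipticE, div_pow, mul_pow,
    sq_sqrt hr.1.le]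
  norm_num
end
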